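/- Assume every a ∈ M has a unique left inverse a^L. Then for all a ∈ M and v ∈ G: (i) a^L◁(a▷v) = (a◁v)^L, and (ii) v · τ((a◁v)^L, a◁v)^{-1} = τ(a^L, a)^{-1} (a^L▷(a▷v)) as elements of G. -/

import Mathlib

/-!
Reassociating `a^L a v` gives `τ(a^L, a) v = (a^L▷(a▷v)) ((a^L◁(a▷v)) (a◁v))`, so
`(a^L◁(a▷v)) (a◁v)` lies in `G`. For a fixed `x`, at most one `s ∈ M` satisfies `s x ∈ G`, because
two such elements differ by a left factor in `G`; this identifies `a^L◁(a▷v)` with `(a◁v)^L`, and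
the displayed equation then rearranges to (ii).
-/

theorem eq_of_mul_mem_of_mul_mem {X : Type*} [Group X] {G : Subgroup X} {M : Set X}
    (hinj : Function.Injective fun p : ↥G × ↥M ↦ (p.1 : X) * (p.2 : X))
    {s t : ↥M} {x : X} (hs : (s : X) * x ∈ G) (ht : (t : X) * x ∈ G) : s = t := by
  let g : ↥G := ⟨t * x, ht⟩ * ⟨s * x, hs⟩⁻¹
  have g_mul_eq : (g : X) * s = (1 : ↥G) * t := by simp [g, mul_assoc]
  exact congrArg Prod.snd (hinj (a₁ := (g, s)) (a₂ := (1, t)) g_mul_eq)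

theorem mul_mul_eq_rho_mul_lho_mul_lho {X : Type*} [Semigroup X] {G M : Set X}
    {rho : ↥M → ↥G → ↥G} {lho : ↥M → ↥G → ↥M}
    (hact : ∀ (s : ↥M) (u : ↥G), (s : X) * (u : X) = (rho s u : X) * (lho s u : X))
    (s t : ↥M) (u : ↥G) :
    (s : X) * t * u = rho s (rho t u) * (lho s (rho t u) * lho t u) :=
  calc
    (s : X) * t * u = s * rho t u * lho t u := by rw [mul_assoc, hact t u, mul_assoc]
    _ = rho s (rho t u) * (lho s (rho t u) * lho t u) := by rw [hact s, mul_assoc]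

theorem statement17_general {X : Type*} [Group X] {G : Subgroup X} {M : Set X}
    (hinj : Function.Injective fun p : ↥G × ↥M ↦ (p.1 : X) * (p.2 : X))
    {tau : ↥M → ↥M → ↥G} {mdot : ↥M → ↥M → ↥M}
    (htau : ∀ s t : ↥M, (s : X) * (t : X) = (tau s t : X) * (mdot s t : X))
    {rho : ↥M → ↥G → ↥G} {lho : ↥M → ↥G → ↥M}
    (hact : ∀ (s : ↥M) (u : ↥G), (s : X) * (u : X) = (rho s u : X) * (lho s u : X))
    {L : ↥M → ↥M} (hL : ∀ s : ↥M, (mdot (L s) s : X) = 1) (a : ↥M) (v : ↥G) :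
    lho (L a) (rho a v) = L (lho a v)
      ∧ v * (tau (L (lho a v)) (lho a v))⁻¹
          = (tau (L a) a)⁻¹ * rho (L a) (rho a v) := by
  have L_mul_self (s : ↥M) : (L s : X) * s = tau (L s) s := by rw [htau, hL, mul_one]
  have tau_mul : (tau (L a) a * v : X)
      = rho (L a) (rho a v) * (lho (L a) (rho a v) * lho a v) := by
    rw [← L_mul_self]
    exact mul_mul_eq_rho_mul_lho_mul_lho hact (L a) a v
  have lho_mul_mem : (lho (L a) (rho a v) * lho a v : X) ∈ G := by
    rw [← G.mul_mem_cancel_left (rho (L a) (rho a v)).2, ← tau_mul]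
    exact (tau (L a) a * v).2
  have L_mul_mem : (L (lho a v) * lho a v : X) ∈ G := by
    rw [L_mul_self]
    exact (tau _ _).2
  have lho_eq : lho (L a) (rho a v) = L (lho a v) :=
    eq_of_mul_mem_of_mul_mem hinj lho_mul_mem L_mul_mem
  refine ⟨lho_eq, ?_⟩
  rw [lho_eq, L_mul_self] at tau_mul
  rw [mul_inv_eq_iff_eq_mul, mul_assoc, eq_inv_mul_iff_mul_eq]
  exact_mod_cast tau_mul

/-- Assume every a ∈ M has a unique left inverse a^L. Then for
all a ∈ M and v ∈ G: (i) a^L◁(a▷v) = (a◁v)^L, and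
(ii) v · τ((a◁v)^L, a◁v)⁻¹ = τ(a^L, a)⁻¹ (a^L▷(a▷v)) as elements of G. -/
theorem statement17 {X : Type*} [Group X] [Fintype X]
    (G : Subgroup X) (M : Set X)
    (hM1 : (1 : X) ∈ M)
    (hfac : ∀ x : X, ∃! p : ↥G × ↥M, x = (p.1 : X) * (p.2 : X))
    (tau : ↥M → ↥M → ↥G) (mdot : ↥M → ↥M → ↥M)
    (htau : ∀ s t : ↥M, (s : X) * (t : X) = (tau s t : X) * (mdot s t : X))
    (rho : ↥M → ↥G → ↥G) (lho : ↥M → ↥G → ↥M)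
    (hact : ∀ (s : ↥M) (u : ↥G), (s : X) * (u : X) = (rho s u : X) * (lho s u : X))
    (L : ↥M → ↥M)
    (hL : ∀ s : ↥M, (mdot (L s) s : X) = 1)
    (hLuniq : ∀ s t : ↥M, (mdot t s : X) = 1 → t = L s) :
    ∀ (a : ↥M) (v : ↥G),
      lho (L a) (rho a v) = L (lho a v)
      ∧ v * (tau (L (lho a v)) (lho a v))⁻¹
          = (tau (L a) a)⁻¹ * rho (L a) (rho a v) := by
  exact statement17_general (fun _ _ hpq ↦ (hfac _).unique rfl hpq) htau hact hL
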